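/- For the harmonizable mixture kernel k_HM with real symmetric positive definite matrices Σ_{1,p}, Σ_{2,p}, and with S_HM(ω, ξ) = ∫∫ k_HM(x, x') exp(−2πi (ω·x − ξ·x')) dx dx' its generalized spectral density, the generalized Fourier inversion formula holds: for all x, x' ∈ ℝ^D, k_HM(x, x') = ∫∫_{ℝ^D×ℝ^D} S_HM(ω, ξ) exp(2πi (ω·x − ξ·x')) dω dξ. In particular k_HM is a harmonizable kernel. -/

import Mathlib

open MeasureTheory Matrix
open scoped BigOperators ComplexOrder

noncomputable section

/-- Euclidean dot product on `ℝ^D`. -/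
def dotR {D : ℕ} (x y : Fin D → ℝ) : ℝ := ∑ d, x d * y d

/-- The harmonizable exponential `exp(2πi (⟨ω, x⟩ - ⟨ξ, x'⟩))`, with `p = (ω, ξ)`. -/
def harmExp {D : ℕ} (p : (Fin D → ℝ) × (Fin D → ℝ)) (x x' : Fin D → ℝ) : ℂ :=
  Complex.exp (2 * (Real.pi : ℂ) * Complex.I * ((dotR p.1 x - dotR p.2 x' : ℝ) : ℂ))

/-- A kernel is harmonizable if it is the generalized inverse Fourier transform of a complex
measure of finite total variation on `ℝ^D × ℝ^D`; the complex measure is encoded by its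
Jordan decomposition into four finite positive measures `μ₁ - μ₂ + i (μ₃ - μ₄)`. -/
def Harmonizable {D : ℕ} (k : (Fin D → ℝ) → (Fin D → ℝ) → ℂ) : Prop :=
  ∃ μ₁ μ₂ μ₃ μ₄ : Measure ((Fin D → ℝ) × (Fin D → ℝ)),
    IsFiniteMeasure μ₁ ∧ IsFiniteMeasure μ₂ ∧ IsFiniteMeasure μ₃ ∧ IsFiniteMeasure μ₄ ∧
    ∀ x x' : Fin D → ℝ,
      k x x' = (∫ p, harmExp p x x' ∂μ₁) - (∫ p, harmExp p x x' ∂μ₂)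
        + Complex.I * ((∫ p, harmExp p x x' ∂μ₃) - (∫ p, harmExp p x x' ∂μ₄))

/-- The locally stationary Gaussian kernel
`k_LSG(u, u') = exp(-2π² ((u+u')/2)ᵀ Σ₁ ((u+u')/2)) · exp(-2π² (u-u')ᵀ Σ₂ (u-u'))`. -/
def kLSG {D : ℕ} (S1 S2 : Matrix (Fin D) (Fin D) ℝ) (u u' : Fin D → ℝ) : ℝ :=
  Real.exp (-(2 * Real.pi ^ 2) * (((u + u') / 2) ⬝ᵥ (S1 *ᵥ ((u + u') / 2)))) *
    Real.exp (-(2 * Real.pi ^ 2) * ((u - u') ⬝ᵥ (S2 *ᵥ (u - u'))))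

/-- The harmonizable mixture kernel.  Products of vectors are Hadamard (elementwise). -/
def kHM {D : ℕ} (P : ℕ) (xc γ : Fin P → Fin D → ℝ) (Q : Fin P → ℕ)
    (μ : (p : Fin P) → Fin (Q p) → Fin D → ℝ)
    (B : (p : Fin P) → Matrix (Fin (Q p)) (Fin (Q p)) ℂ)
    (S1 S2 : Fin P → Matrix (Fin D) (Fin D) ℝ)
    (x x' : Fin D → ℝ) : ℂ :=
  ∑ p, ((kLSG (S1 p) (S2 p) ((x - xc p) * γ p) ((x' - xc p) * γ p) : ℝ) : ℂ) *
    ∑ i, ∑ j,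
      (starRingEnd ℂ)
          (Complex.exp (2 * (Real.pi : ℂ) * Complex.I * ((dotR (μ p i) (x - xc p) : ℝ) : ℂ))) *
        B p i j *
        Complex.exp (2 * (Real.pi : ℂ) * Complex.I * ((dotR (μ p j) (x' - xc p) : ℝ) : ℂ))

open scoped FourierTransform RealInnerProductSpace

/-- A continuous integrable function with integrable Fourier transform, i.e. one to which the
Fourier inversion theorem applies. -/
structure FourierInvertible {V : Type*} [NormedAddCommGroup V] [InnerProductSpace ℝ V]
    [FiniteDimensional ℝ V] [MeasurableSpace V] [BorelSpace V] (f : V → ℂ) : Prop where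
  continuous : Continuous f
  integrable : Integrable f
  integrable_fourier : Integrable (𝓕 f)

theorem LinearMap.det_ne_zero_of_injective {V : Type*} [AddCommGroup V] [Module ℝ V]
    [FiniteDimensional ℝ V] {A : V →ₗ[ℝ] V} (hA : Function.Injective A) : LinearMap.det A ≠ 0 :=
  (LinearEquiv.isUnit_det' (LinearEquiv.ofInjectiveEndo A hA)).ne_zero

section InnerProductSpace

variable {V : Type*} [NormedAddCommGroup V] [InnerProductSpace ℝ V]
  [FiniteDimensional ℝ V] [MeasurableSpace V] [BorelSpace V] {f g : V → ℂ}

theorem integrable_comp_linearMap (hf : Integrable f) {A : V →ₗ[ℝ] V}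
    (hA : Function.Injective A) : Integrable (fun v ↦ f (A v)) := by
  have hmap := Measure.map_linearMap_addHaar_eq_smul_addHaar (volume : Measure V)
    (LinearMap.det_ne_zero_of_injective hA)
  have hA' : MeasurableEmbedding A :=
    (LinearMap.continuous_of_finiteDimensional A).measurableEmbedding hA
  refine (hA'.integrable_map_iff (μ := volume) (g := f)).1 ?_
  rw [hmap]
  exact hf.smul_measure ENNReal.ofReal_ne_top

theorem integral_comp_linearMap (f : V → ℂ) {A : V →ₗ[ℝ] V} (hA : Function.Injective A) :
    ∫ v, f (A v) = |(LinearMap.det A)⁻¹| • ∫ v, f v := by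
  have hmap := Measure.map_linearMap_addHaar_eq_smul_addHaar (volume : Measure V)
    (LinearMap.det_ne_zero_of_injective hA)
  have hA' : MeasurableEmbedding A :=
    (LinearMap.continuous_of_finiteDimensional A).measurableEmbedding hA
  rw [← hA'.integral_map, hmap, integral_smul_measure, ENNReal.toReal_ofReal (abs_nonneg _)]

namespace FourierInvertible

theorem add (hf : FourierInvertible f) (hg : FourierInvertible g) :
    FourierInvertible (fun v ↦ f v + g v) where
  continuous := hf.continuous.add hg.continuous
  integrable := hf.integrable.add hg.integrable
  integrable_fourier := by
    refine (hf.integrable_fourier.add hg.integrable_fourier).congr (.of_forall fun w ↦ ?_)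
    simp only [Pi.add_apply, Real.fourier_eq, smul_add]
    rw [integral_add]
    · exact (Real.fourierIntegral_convergent_iff w).2 hf.integrable
    · exact (Real.fourierIntegral_convergent_iff w).2 hg.integrable

theorem const_mul (hf : FourierInvertible f) (c : ℂ) :
    FourierInvertible (fun v ↦ c * f v) where
  continuous := continuous_const.mul hf.continuous
  integrable := hf.integrable.const_mul c
  integrable_fourier := by
    refine (hf.integrable_fourier.const_mul c).congr (.of_forall fun w ↦ ?_)
    simp only [Real.fourier_eq', smul_eq_mul, mul_left_comm _ c]
    rw [integral_const_mul]

theorem zero : FourierInvertible (fun _ : V ↦ 0) where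
  continuous := continuous_const
  integrable := integrable_zero _ _ _
  integrable_fourier := by
    refine (integrable_zero V ℂ volume).congr (.of_forall fun w ↦ ?_)
    simp [Real.fourier_eq]

theorem sum {ι : Type*} (s : Finset ι) {F : ι → V → ℂ} (hF : ∀ i, FourierInvertible (F i)) :
    FourierInvertible (fun v ↦ ∑ i ∈ s, F i v) := by
  classical
  induction s using Finset.induction_on with
  | empty => simpa using zero
  | insert i s hi ih => simpa [Finset.sum_insert hi] using (hF i).add ih

theorem comp_sub_const (hf : FourierInvertible f) (a : V) :
    FourierInvertible (fun v ↦ f (v - a)) where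
  continuous := by have := hf.continuous; fun_prop
  integrable := hf.integrable.comp_sub_right a
  integrable_fourier := by
    have key : 𝓕 (fun v ↦ f (v - a)) = fun w ↦ 𝐞 (-⟪a, w⟫) • 𝓕 f w := by
      ext w
      simpa [Function.comp_def, ← sub_eq_add_neg] using!
        congr_fun (VectorFourier.fourierIntegral_comp_add_right 𝐞 volume (innerₗ V) f (-a)) w
    rw [key]
    refine hf.integrable_fourier.norm.mono ?_ (.of_forall fun w ↦ by simp)
    refine AEStronglyMeasurable.smul (Continuous.aestronglyMeasurable ?_)
      hf.integrable_fourier.aestronglyMeasurable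
    fun_prop

theorem modulate (hf : FourierInvertible f) (m : V) :
    FourierInvertible (fun v ↦ Complex.exp (2 * Real.pi * Complex.I * (⟪m, v⟫ : ℝ)) * f v) where
  continuous := by have := hf.continuous; fun_prop
  integrable := by
    refine hf.integrable.norm.mono ?_ (.of_forall fun w ↦ ?_)
    · exact (by have := hf.continuous; fun_prop : Continuous _).aestronglyMeasurable
    · rw [norm_mul, Complex.norm_exp]
      simp
  integrable_fourier := by
    refine (hf.integrable_fourier.comp_sub_right m).congr (.of_forall fun w ↦ ?_)
    simp only [Real.fourier_eq', smul_eq_mul, ← mul_assoc, ← Complex.exp_add]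
    congr! 4 with v
    rw [inner_sub_right, real_inner_comm m v]
    push_cast
    ring

theorem comp_linearMap (hf : FourierInvertible f) {A : V →ₗ[ℝ] V} (hA : Function.Injective A) :
    FourierInvertible (fun v ↦ f (A v)) where
  continuous := hf.continuous.comp (LinearMap.continuous_of_finiteDimensional A)
  integrable := integrable_comp_linearMap hf.integrable hA
  integrable_fourier := by
    let L := LinearEquiv.ofInjectiveEndo A hA
    have hL (v : V) : L.symm (A v) = v := L.symm_apply_apply v
    let M : V →ₗ[ℝ] V := LinearMap.adjoint (L.symm : V →ₗ[ℝ] V)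
    have hM (v w : V) : ⟪v, M w⟫ = ⟪L.symm v, w⟫ := LinearMap.adjoint_inner_right _ _ _
    have hMinj : Function.Injective M := by
      refine (injective_iff_map_eq_zero M).2 fun w hw ↦ ?_
      have := hM (A w) w
      rw [hw, inner_zero_right, hL] at this
      exact inner_self_eq_zero.1 this.symm
    refine ((integrable_comp_linearMap hf.integrable_fourier hMinj).smul
      |(LinearMap.det A)⁻¹|).congr (.of_forall fun w ↦ ?_)
    simp only [Pi.smul_apply, Real.fourier_eq]
    rw [← integral_comp_linearMap _ hA]
    simp only [hM, hL]

theorem exp_neg_norm_sq : FourierInvertible (fun v : V ↦ Complex.exp (-((‖v‖ ^ 2 : ℝ) : ℂ))) where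
  continuous := by fun_prop
  integrable := by
    simpa using GaussianFourier.integrable_cexp_neg_mul_sq_norm_add (b := 1) (by simp) 0 (0 : V)
  integrable_fourier := by
    have h := (GaussianFourier.integrable_cexp_neg_mul_sq_norm_add (b := (Real.pi : ℂ) ^ 2)
      (by rw [← Complex.ofReal_pow, Complex.ofReal_re]; positivity) 0 (0 : V)).const_mul
        ((Real.pi / 1 : ℂ) ^ (Module.finrank ℝ V / 2 : ℂ))
    refine h.congr (.of_forall fun w ↦ ?_)
    have := fourier_gaussian_innerProductSpace (V := V) (b := 1) (by simp) w
    simp only [neg_mul, one_mul, div_one] at this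
    simp [this]

end FourierInvertible

end InnerProductSpace

/-- The Euclidean space `ℝ^D × ℝ^D`. -/
abbrev EuclideanPair (D : ℕ) : Type :=
  WithLp 2 (EuclideanSpace ℝ (Fin D) × EuclideanSpace ℝ (Fin D))

/-- A pair of coordinate vectors as a point of the Euclidean space `ℝ^D × ℝ^D`. -/
def euclideanPair {D : ℕ} (q : (Fin D → ℝ) × (Fin D → ℝ)) : EuclideanPair D :=
  WithLp.toLp 2 (WithLp.toLp 2 q.1, WithLp.toLp 2 q.2)

theorem measurePreserving_euclideanPair (D : ℕ) :
    MeasurePreserving (euclideanPair (D := D)) :=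
  (WithLp.volume_preserving_toLp _ _).comp
    ((PiLp.volume_preserving_toLp (Fin D)).prod (PiLp.volume_preserving_toLp (Fin D)))

theorem measurableEmbedding_euclideanPair (D : ℕ) :
    MeasurableEmbedding (euclideanPair (D := D)) :=
  (MeasurableEquiv.toLp 2 _).measurableEmbedding.comp
    ((MeasurableEquiv.toLp 2 _).prodCongr (MeasurableEquiv.toLp 2 _)).measurableEmbedding

theorem euclideanPair_add {D : ℕ} (q r : (Fin D → ℝ) × (Fin D → ℝ)) :
    euclideanPair q + euclideanPair r = euclideanPair (q + r) := rfl

theorem euclideanPair_smul {D : ℕ} (a : ℝ) (q : (Fin D → ℝ) × (Fin D → ℝ)) :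
    a • euclideanPair q = euclideanPair (a • q) := rfl

theorem inner_euclideanPair {D : ℕ} (q r : (Fin D → ℝ) × (Fin D → ℝ)) :
    inner ℝ (euclideanPair q) (euclideanPair r) = dotR q.1 r.1 + dotR q.2 r.2 := by
  simp [euclideanPair, WithLp.prod_inner_apply, dotR, PiLp.inner_apply, mul_comm]

theorem dotR_neg_left {D : ℕ} (x y : Fin D → ℝ) : dotR (-x) y = -dotR x y := by
  simp [dotR]

theorem dotR_comm {D : ℕ} (x y : Fin D → ℝ) : dotR x y = dotR y x := by
  simp [dotR, mul_comm]

/-- The generalized spectral density `S(ω, ξ) = ∫∫ k(x, x') exp(-2πi(⟨ω,x⟩ - ⟨ξ,x'⟩)) dx dx'`. -/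
def spectralDensity {D : ℕ} (k : (Fin D → ℝ) → (Fin D → ℝ) → ℂ) (ω ξ : Fin D → ℝ) : ℂ :=
  ∫ y : Fin D → ℝ, ∫ y' : Fin D → ℝ, k y y' *
    Complex.exp (-(2 * (Real.pi : ℂ) * Complex.I * ((dotR ω y - dotR ξ y' : ℝ) : ℂ)))

/-- A kernel viewed as a function on the Euclidean space `ℝ^D × ℝ^D`. -/
def pairFun {D : ℕ} (k : (Fin D → ℝ) → (Fin D → ℝ) → ℂ) (v : EuclideanPair D) : ℂ :=
  k v.fst.ofLp v.snd.ofLp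

section Kernel

variable {D : ℕ} {k : (Fin D → ℝ) → (Fin D → ℝ) → ℂ}

/-- The reflection `(ω, ξ) ↦ (ω, -ξ)`. -/
def negSnd (q : (Fin D → ℝ) × (Fin D → ℝ)) : (Fin D → ℝ) × (Fin D → ℝ) := (q.1, -q.2)

theorem measurePreserving_negSnd : MeasurePreserving (negSnd (D := D)) :=
  (MeasurePreserving.id volume).prod (Measure.measurePreserving_neg volume)

theorem measurableEmbedding_negSnd : MeasurableEmbedding (negSnd (D := D)) :=
  ((MeasurableEquiv.refl (Fin D → ℝ)).prodCongr
    (MeasurableEquiv.neg (Fin D → ℝ))).measurableEmbedding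

theorem norm_harmExp (q : (Fin D → ℝ) × (Fin D → ℝ)) (x x' : Fin D → ℝ) :
    ‖harmExp q x x'‖ = 1 := by
  rw [harmExp, Complex.norm_exp]
  simp

theorem continuous_harmExp (x x' : Fin D → ℝ) : Continuous (fun q ↦ harmExp q x x') := by
  unfold harmExp dotR
  fun_prop

theorem spectralDensity_eq_fourier (hk : Integrable (pairFun k))
    (q : (Fin D → ℝ) × (Fin D → ℝ)) :
    spectralDensity k q.1 q.2 = 𝓕 (pairFun k) (euclideanPair (negSnd q)) := by
  have hint : Integrable (fun r : (Fin D → ℝ) × (Fin D → ℝ) ↦ k r.1 r.2 *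
      Complex.exp
        (-(2 * (Real.pi : ℂ) * Complex.I * ((dotR q.1 r.1 - dotR q.2 r.2 : ℝ) : ℂ)))) := by
    have hk' : Integrable (fun r : (Fin D → ℝ) × (Fin D → ℝ) ↦ k r.1 r.2) :=
      (measurePreserving_euclideanPair D).integrable_comp_of_integrable hk
    refine hk'.norm.mono (hk'.aestronglyMeasurable.mul (Continuous.aestronglyMeasurable ?_))
      (.of_forall fun r ↦ ?_)
    · unfold dotR
      fun_prop
    · rw [norm_mul, Complex.norm_exp]
      simp
  rw [spectralDensity, ← integral_prod _ hint, Real.fourier_eq',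
    ← (measurePreserving_euclideanPair D).integral_comp (measurableEmbedding_euclideanPair D)]
  refine integral_congr_ae (.of_forall fun r ↦ ?_)
  simp only [inner_euclideanPair, negSnd, smul_eq_mul]
  rw [mul_comm, dotR_comm r.1, dotR_comm r.2, dotR_neg_left]
  congr 2
  push_cast
  ring

theorem integrable_spectralDensity (hk : FourierInvertible (pairFun k)) :
    Integrable (fun q : (Fin D → ℝ) × (Fin D → ℝ) ↦ spectralDensity k q.1 q.2) := by
  simp only [spectralDensity_eq_fourier hk.integrable]
  exact measurePreserving_negSnd.integrable_comp_of_integrable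
    ((measurePreserving_euclideanPair D).integrable_comp_of_integrable hk.integrable_fourier)

theorem integrable_spectralDensity_mul_harmExp (hk : FourierInvertible (pairFun k))
    (x x' : Fin D → ℝ) : Integrable (fun q : (Fin D → ℝ) × (Fin D → ℝ) ↦
      spectralDensity k q.1 q.2 * harmExp q x x') := by
  have h := integrable_spectralDensity hk
  refine h.norm.mono (h.aestronglyMeasurable.mul
    (continuous_harmExp x x').aestronglyMeasurable) (.of_forall fun q ↦ ?_)
  simp [norm_harmExp]

theorem integral_spectralDensity_mul_harmExp (hk : FourierInvertible (pairFun k))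
    (x x' : Fin D → ℝ) :
    ∫ q : (Fin D → ℝ) × (Fin D → ℝ), spectralDensity k q.1 q.2 * harmExp q x x' = k x x' := by
  have h := congr_fun (hk.continuous.fourierInv_fourier_eq hk.integrable hk.integrable_fourier)
    (euclideanPair (x, x'))
  refine Eq.trans ?_ h
  rw [Real.fourierInv_eq',
    ← (measurePreserving_euclideanPair D).integral_comp (measurableEmbedding_euclideanPair D),
    ← measurePreserving_negSnd.integral_comp measurableEmbedding_negSnd]
  refine integral_congr_ae (.of_forall fun q ↦ ?_)
  have hq := spectralDensity_eq_fourier hk.integrable (negSnd q)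
  simp only [negSnd, neg_neg] at hq
  simp only [hq, inner_euclideanPair, harmExp, negSnd, smul_eq_mul]
  rw [mul_comm, dotR_neg_left]
  congr 2
  push_cast
  ring

theorem kernel_eq_integral_spectralDensity (hk : FourierInvertible (pairFun k))
    (x x' : Fin D → ℝ) :
    k x x' = ∫ ω : Fin D → ℝ, ∫ ξ : Fin D → ℝ, spectralDensity k ω ξ * harmExp (ω, ξ) x x' := by
  rw [← integral_spectralDensity_mul_harmExp hk x x']
  exact integral_prod _ (integrable_spectralDensity_mul_harmExp hk x x')

/-- The positive part of an integrable function is the density of a finite measure. -/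
theorem exists_finite_measure_integral_eq {α : Type*} [MeasurableSpace α] {μ : Measure α}
    {s : α → ℝ} (hs : Integrable s μ) :
    ∃ ν : Measure α, IsFiniteMeasure ν ∧
      ∀ g : α → ℂ, ∫ a, g a ∂ν = ∫ a, ((max (s a) 0 : ℝ) : ℂ) * g a ∂μ := by
  refine ⟨μ.withDensity fun a ↦ ENNReal.ofReal (s a),
    isFiniteMeasure_withDensity_ofReal hs.2, fun g ↦ ?_⟩
  rw [integral_withDensity_eq_integral_toReal_smul₀ hs.aemeasurable.ennreal_ofReal
    (.of_forall fun _ ↦ ENNReal.ofReal_lt_top)]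
  simp [ENNReal.toReal_ofReal']

theorem Harmonizable.of_density {S : (Fin D → ℝ) × (Fin D → ℝ) → ℂ} (hS : Integrable S)
    (hk : ∀ x x', k x x' = ∫ q, S q * harmExp q x x') : Harmonizable k := by
  obtain ⟨μ₁, h₁, e₁⟩ := exists_finite_measure_integral_eq hS.re
  obtain ⟨μ₂, h₂, e₂⟩ := exists_finite_measure_integral_eq hS.re.neg
  obtain ⟨μ₃, h₃, e₃⟩ := exists_finite_measure_integral_eq hS.im
  obtain ⟨μ₄, h₄, e₄⟩ := exists_finite_measure_integral_eq hS.im.neg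
  refine ⟨μ₁, μ₂, μ₃, μ₄, h₁, h₂, h₃, h₄, fun x x' ↦ ?_⟩
  have hint {s : (Fin D → ℝ) × (Fin D → ℝ) → ℝ} (hs : Integrable s) :
      Integrable (fun q ↦ ((max (s q) 0 : ℝ) : ℂ) * harmExp q x x') := by
    have h := hs.pos_part.ofReal (𝕜 := ℂ)
    refine h.norm.mono (h.aestronglyMeasurable.mul
      (continuous_harmExp x x').aestronglyMeasurable) (.of_forall fun q ↦ ?_)
    simp [norm_harmExp]
  rw [hk, e₁, e₂, e₃, e₄, ← integral_sub (hint hS.re) (hint hS.re.neg),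
    ← integral_sub (hint hS.im) (hint hS.im.neg), ← integral_const_mul]
  refine Eq.trans ?_ (integral_add ((hint hS.re).sub (hint hS.re.neg))
    (((hint hS.im).sub (hint hS.im.neg)).const_mul Complex.I))
  refine integral_congr_ae (.of_forall fun q ↦ ?_)
  have hsplit (a : ℝ) : ((max a 0 : ℝ) : ℂ) - ((max (-a) 0 : ℝ) : ℂ) = a := by
    rw [← Complex.ofReal_sub]
    exact congrArg _ (posPart_sub_negPart a)
  simp only [Pi.neg_apply, ← sub_mul, hsplit]
  conv_lhs => rw [← Complex.re_add_im (S q)]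
  simp only [RCLike.re_eq_complex_re, RCLike.im_eq_complex_im]
  ring

theorem Harmonizable.of_fourierInvertible (hk : FourierInvertible (pairFun k)) :
    Harmonizable k :=
  .of_density (integrable_spectralDensity hk)
    fun x x' ↦ (integral_spectralDensity_mul_harmExp hk x x').symm

end Kernel

theorem Matrix.PosDef.exists_quadratic_eq_norm_sq {n : Type*} [Fintype n] [DecidableEq n]
    {S : Matrix n n ℝ} (hS : S.PosDef) :
    ∃ R : Matrix n n ℝ, (∀ x, x ⬝ᵥ (S *ᵥ x) = ‖WithLp.toLp 2 (R *ᵥ x)‖ ^ 2) ∧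
      ∀ x, R *ᵥ x = 0 → x = 0 := by
  open scoped MatrixOrder in
  obtain ⟨R, hR⟩ := CStarAlgebra.nonneg_iff_eq_star_mul_self.mp hS.posSemidef.nonneg
  have hq (x : n → ℝ) : x ⬝ᵥ (S *ᵥ x) = ‖WithLp.toLp 2 (R *ᵥ x)‖ ^ 2 := by
    rw [EuclideanSpace.real_norm_sq_eq, hR, star_eq_conjTranspose,
      conjTranspose_eq_transpose_of_trivial, ← mulVec_mulVec, dotProduct_mulVec, vecMul_transpose]
    simp [dotProduct, sq]
  refine ⟨R, hq, fun x hx ↦ ?_⟩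
  by_contra hne
  have hpos := hS.dotProduct_mulVec_pos hne
  rw [star_trivial, hq, hx] at hpos
  simp at hpos

theorem exists_linearMap_kLSG_eq {D : ℕ} {S1 S2 : Matrix (Fin D) (Fin D) ℝ} (hS1 : S1.PosDef)
    (hS2 : S2.PosDef) {γ : Fin D → ℝ} (hγ : ∀ d, 0 < γ d) :
    ∃ A : EuclideanPair D →ₗ[ℝ] EuclideanPair D, Function.Injective A ∧
      ∀ x x' : Fin D → ℝ, kLSG S1 S2 (x * γ) (x' * γ) =
        Real.exp (-‖A (euclideanPair (x, x'))‖ ^ 2) := by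
  obtain ⟨R1, hR1, hR1'⟩ := hS1.exists_quadratic_eq_norm_sq
  obtain ⟨R2, hR2, hR2'⟩ := hS2.exists_quadratic_eq_norm_sq
  let c : ℝ := √2 * Real.pi
  have hc : c ≠ 0 := by positivity
  have hc2 : c ^ 2 = 2 * Real.pi ^ 2 := by simp [c, mul_pow]
  let A : EuclideanPair D →ₗ[ℝ] EuclideanPair D :=
    { toFun := fun v ↦ c • euclideanPair
        (R1 *ᵥ ((v.fst.ofLp * γ + v.snd.ofLp * γ) / 2), R2 *ᵥ (v.fst.ofLp * γ - v.snd.ofLp * γ))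
      map_add' := fun v w ↦ by
        rw [← smul_add, euclideanPair_add, Prod.mk_add_mk, ← mulVec_add, ← mulVec_add]
        congr! 4 <;> ext d <;> simp <;> ring
      map_smul' := fun a v ↦ by
        rw [RingHom.id_apply, smul_comm a c, euclideanPair_smul a, Prod.smul_mk, ← mulVec_smul,
          ← mulVec_smul]
        congr! 4 <;> ext d <;> simp <;> ring }
  have hA (v : EuclideanPair D) : A v = c • euclideanPair
        (R1 *ᵥ ((v.fst.ofLp * γ + v.snd.ofLp * γ) / 2), R2 *ᵥ (v.fst.ofLp * γ - v.snd.ofLp * γ)) :=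
    rfl
  refine ⟨A, (injective_iff_map_eq_zero A).2 fun v hv ↦ ?_, fun x x' ↦ ?_⟩
  · rw [hA, smul_eq_zero_iff_right hc] at hv
    have hsum := hR1' _ (congrArg (fun w : EuclideanPair D ↦ w.fst.ofLp) hv)
    have hdiff := hR2' _ (congrArg (fun w : EuclideanPair D ↦ w.snd.ofLp) hv)
    have hzero (d : Fin D) : v.fst.ofLp d = 0 ∧ v.snd.ofLp d = 0 := by
      have h1 := congrFun hsum d
      have h2 := congrFun hdiff d
      simp only [Pi.div_apply, Pi.add_apply, Pi.sub_apply, Pi.mul_apply,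
        Pi.ofNat_apply] at h1 h2
      constructor <;> refine (mul_eq_zero_iff_right (hγ d).ne').1 ?_ <;> linarith
    have hfst : v.fst.ofLp = 0 := funext fun d ↦ (hzero d).1
    have hsnd : v.snd.ofLp = 0 := funext fun d ↦ (hzero d).2
    change euclideanPair (v.fst.ofLp, v.snd.ofLp) = 0
    rw [hfst, hsnd]
    rfl
  · rw [hA, norm_smul, mul_pow, Real.norm_eq_abs, sq_abs, hc2, WithLp.prod_norm_sq_eq_of_L2, kLSG,
      hR1, hR2, ← Real.exp_add]
    simp only [euclideanPair, WithLp.toLp_fst, WithLp.toLp_snd]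
    congr 1
    ring

theorem fourierInvertible_kHM {D P : ℕ} (xc γ : Fin P → Fin D → ℝ) (hγ : ∀ p d, 0 < γ p d)
    (Q : Fin P → ℕ) (μ : (p : Fin P) → Fin (Q p) → Fin D → ℝ)
    (B : (p : Fin P) → Matrix (Fin (Q p)) (Fin (Q p)) ℂ)
    (S1 S2 : Fin P → Matrix (Fin D) (Fin D) ℝ)
    (hS1 : ∀ p, (S1 p).PosDef) (hS2 : ∀ p, (S2 p).PosDef) :
    FourierInvertible (pairFun (kHM P xc γ Q μ B S1 S2)) := by
  choose A hA hAk using fun p ↦ exists_linearMap_kLSG_eq (hS1 p) (hS2 p) (hγ p)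
  have key : pairFun (kHM P xc γ Q μ B S1 S2) = fun v ↦ ∑ p, ∑ i, ∑ j, B p i j *
      (Complex.exp (2 * Real.pi * Complex.I *
          (inner ℝ (euclideanPair (-μ p i, μ p j)) (v - euclideanPair (xc p, xc p)) : ℝ)) *
        Complex.exp (-((‖A p (v - euclideanPair (xc p, xc p))‖ ^ 2 : ℝ) : ℂ))) := by
    ext v
    simp only [pairFun, kHM, Finset.mul_sum]
    refine Finset.sum_congr rfl fun p _ ↦ Finset.sum_congr rfl fun i _ ↦
      Finset.sum_congr rfl fun j _ ↦ ?_
    have hv : v - euclideanPair (xc p, xc p) =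
      euclideanPair (v.fst.ofLp - xc p, v.snd.ofLp - xc p) := rfl
    rw [hv, hAk, inner_euclideanPair, dotR_neg_left, ← Complex.exp_conj, Complex.ofReal_exp]
    simp only [map_mul, Complex.conj_I, Complex.conj_ofReal, map_ofNat]
    rw [mul_comm _ (B p i j), mul_assoc (B p i j), mul_left_comm, ← Complex.exp_add,
      ← Complex.exp_add, ← Complex.exp_add]
    congr 2
    push_cast
    ring
  rw [key]
  exact .sum _ fun p ↦ .sum _ fun i ↦ .sum _ fun j ↦
    (((FourierInvertible.exp_neg_norm_sq.comp_linearMap (hA p)).modulate _).comp_sub_const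
      (euclideanPair (xc p, xc p))).const_mul (B p i j)

/-- Generalized Fourier inversion holds for the harmonizable mixture kernel: with
`S_HM(ω, ξ) = ∫∫ k_HM(x, x') exp(-2πi(⟨ω,x⟩ - ⟨ξ,x'⟩)) dx dx'` its generalized spectral
density, one has `k_HM(x, x') = ∫∫ S_HM(ω, ξ) exp(2πi(⟨ω,x⟩ - ⟨ξ,x'⟩)) dω dξ`.
In particular `k_HM` is a harmonizable kernel. -/
theorem kHM_inversion_and_harmonizable (D : ℕ) (hD : 0 < D) (P : ℕ) (hP : 0 < P)
    (xc : Fin P → Fin D → ℝ)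
    (γ : Fin P → Fin D → ℝ) (hγ : ∀ p d, 0 < γ p d)
    (Q : Fin P → ℕ) (hQ : ∀ p, 0 < Q p)
    (μ : (p : Fin P) → Fin (Q p) → Fin D → ℝ)
    (B : (p : Fin P) → Matrix (Fin (Q p)) (Fin (Q p)) ℂ) (hB : ∀ p, (B p).PosSemidef)
    (S1 S2 : Fin P → Matrix (Fin D) (Fin D) ℝ)
    (hS1 : ∀ p, (S1 p).PosDef) (hS2 : ∀ p, (S2 p).PosDef) :
    (∀ x x' : Fin D → ℝ,
      kHM P xc γ Q μ B S1 S2 x x'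
        = ∫ ω : Fin D → ℝ, ∫ ξ : Fin D → ℝ,
            (∫ y : Fin D → ℝ, ∫ y' : Fin D → ℝ,
              kHM P xc γ Q μ B S1 S2 y y' *
                Complex.exp
                  (-(2 * (Real.pi : ℂ) * Complex.I * ((dotR ω y - dotR ξ y' : ℝ) : ℂ)))) *
              Complex.exp (2 * (Real.pi : ℂ) * Complex.I * ((dotR ω x - dotR ξ x' : ℝ) : ℂ)))
    ∧ Harmonizable (kHM P xc γ Q μ B S1 S2) := by
  have hk := fourierInvertible_kHM xc γ hγ Q μ B S1 S2 hS1 hS2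
  exact ⟨kernel_eq_integral_spectralDensity hk, .of_fourierInvertible hk⟩
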